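/- arXiv:2303.12632 — 7 statements merged into one kernel-verified Lean document; each statement's English description precedes it below -/
import Mathlib

section
/- Let Δ be a positive integer and let G be a finite simple graph with n vertices, m edges, and maximum degree at most Δ. If d ∈ {0, 1, ..., Δ−1} is an integer such that 2Δd/(Δ+d) ≤ 2m/n ≤ 2Δ(d+1)/(Δ+d+1), then irr(G) ≤ d(d+1)·n + (1/Δ)·(Δ² − (2d+1)Δ − d² − d)·m. -/
open Finset SimpleGraph

/-- The irregularity of a graph: `irr G = ∑_{uv ∈ E(G)} |d_G(u) - d_G(v)|`. -/
def irr {V : Type*} [Fintype V] (G : SimpleGraph V) [DecidableRel G.Adj] : ℤ :=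
  ∑ e ∈ G.edgeFinset, Sym2.lift ⟨fun u v => |(G.degree u : ℤ) - (G.degree v : ℤ)|,
    fun u v => by simp [abs_sub_comm]⟩ e

/-!
Put `c = d (d + 1)`. For an edge with end degrees `b ≤ a ≤ Δ`, monotonicity of `x ↦ x - c / x`
gives `a - c / a ≤ Δ - c / Δ`, while `(b - d) (b - d - 1) ≥ 0`, a product of consecutive integers,
gives `2 d + 1 ≤ b + c / b`. Subtracting, `a - b ≤ c / a + c / b + (Δ - (2 d + 1) - c / Δ)`.
Summed over all edges, the first two terms contribute `c` for each non-isolated vertex.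
-/

section Arithmetic

lemma int_cast_mul_add_one_nonneg {R : Type*} [Ring R] [PartialOrder R] [IsOrderedRing R]
    (d : ℤ) : (0 : R) ≤ d * (d + 1) := by
  have h : 0 ≤ d * (d + 1) := by linarith [Int.le_self_sq (-d)]
  exact_mod_cast Int.cast_nonneg (R := R) h

variable {K : Type*} [Field K] [LinearOrder K] [IsStrictOrderedRing K]

lemma two_mul_add_one_le_add_div (d : ℤ) {b : ℤ} (hb : 0 < b) :
    (2 * d + 1 : K) ≤ b + d * (d + 1) / b := by
  have hb' : (0 : K) < b := by exact_mod_cast hb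
  have hconsecutive : (0 : K) ≤ (b - d - 1) * (b - d) := by
    simpa using int_cast_mul_add_one_nonneg (R := K) (b - d - 1)
  have hfactor : b + d * (d + 1) / b - (2 * d + 1 : K) = (b - d - 1) * (b - d) / b := by
    field_simp
    ring
  exact sub_nonneg.mp (hfactor ▸ div_nonneg hconsecutive hb'.le)

lemma sub_le_div_add_div_add (d : ℤ) {a Δ : K} (ha : 0 < a) (haΔ : a ≤ Δ) {b : ℤ} (hb : 0 < b) :
    a - b ≤ d * (d + 1) / a + d * (d + 1) / b + (Δ - (2 * d + 1) - d * (d + 1) / Δ) := by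
  have hmono : (d * (d + 1) / Δ : K) ≤ d * (d + 1) / a :=
    div_le_div_of_nonneg_left (int_cast_mul_add_one_nonneg d) ha haΔ
  linarith [two_mul_add_one_le_add_div (K := K) d hb]

end Arithmetic

section Graph

variable {V : Type*} [Fintype V] (G : SimpleGraph V) [DecidableRel G.Adj]

lemma sum_edgeFinset_sum_toFinset [DecidableEq V] {M : Type*} [AddCommMonoid M] (f : V → M) :
    ∑ e ∈ G.edgeFinset, ∑ v ∈ e.toFinset, f v = ∑ v, G.degree v • f v := by
  calc ∑ e ∈ G.edgeFinset, ∑ v ∈ e.toFinset, f v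
      = ∑ v, ∑ _e ∈ G.incidenceFinset v, f v :=
        sum_comm' fun e v => by simp [incidenceFinset_eq_filter]
    _ = ∑ v, G.degree v • f v := by
        simp only [sum_const, card_incidenceFinset_eq_degree]

lemma irr_le_sum_degree_mul_add {R : Type*} [CommRing R] [LinearOrder R] [IsStrictOrderedRing R]
    (f : V → R) (C : R) (h : ∀ u v, G.Adj u v → (G.degree u - G.degree v : R) ≤ f u + f v + C) :
    (irr G : R) ≤ ∑ v, G.degree v * f v + C * #G.edgeFinset := by
  classical
  calc (irr G : R)
      ≤ ∑ e ∈ G.edgeFinset, (∑ v ∈ e.toFinset, f v + C) := by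
        rw [irr, Int.cast_sum]
        refine sum_le_sum fun e he => ?_
        induction e with
        | _ u v =>
          have huv : G.Adj u v := by simpa using he
          rw [Sym2.toFinset_mk_eq, sum_pair huv.ne, Sym2.lift_mk]
          push_cast
          exact abs_sub_le_iff.mpr ⟨h u v huv, add_comm (f v) (f u) ▸ h v u huv.symm⟩
    _ = ∑ v, G.degree v * f v + C * #G.edgeFinset := by
        simp only [sum_add_distrib, sum_edgeFinset_sum_toFinset, sum_const, nsmul_eq_mul,
          mul_comm C]

variable {K : Type*} [Field K] [LinearOrder K] [IsStrictOrderedRing K]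

lemma sum_degree_mul_div_degree_le {c : K} (hc : 0 ≤ c) :
    ∑ v, (G.degree v : K) * (c / G.degree v) ≤ c * Fintype.card V := by
  have hterm (v : V) : (G.degree v : K) * (c / G.degree v) ≤ c := by
    rw [mul_div_left_comm]
    exact mul_le_of_le_one_right hc (div_self_le_one _)
  simpa [mul_comm c] using sum_le_card_nsmul univ _ c fun v _ => hterm v

theorem stmt_0_general {Δ : K} (hΔ : 0 < Δ) (hmax : ∀ v, (G.degree v : K) ≤ Δ) (d : ℤ) :
    (irr G : K) ≤ d * (d + 1) * Fintype.card V +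
      (1 / Δ) * (Δ ^ 2 - (2 * d + 1) * Δ - d ^ 2 - d) * #G.edgeFinset := by
  have hedge (u v : V) (huv : G.Adj u v) :
      (G.degree u - G.degree v : K) ≤ d * (d + 1) / G.degree u + d * (d + 1) / G.degree v +
        (Δ - (2 * d + 1) - d * (d + 1) / Δ) := by
    have hu : (0 : K) < G.degree u := by exact_mod_cast huv.degree_pos_left
    have hv : (0 : ℤ) < G.degree v := by exact_mod_cast huv.degree_pos_right
    exact_mod_cast sub_le_div_add_div_add d hu (hmax u) hv
  have hcoeff : Δ - (2 * d + 1) - d * (d + 1) / Δ =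
      (1 / Δ) * (Δ ^ 2 - (2 * d + 1) * Δ - d ^ 2 - d) := by
    field_simp
    ring
  rw [← hcoeff]
  exact (irr_le_sum_degree_mul_add G _ _ hedge).trans <|
    add_le_add_left (sum_degree_mul_div_degree_le G (int_cast_mul_add_one_nonneg d)) _

end Graph

theorem stmt_0 {V : Type*} [Fintype V] [Nonempty V] (G : SimpleGraph V) [DecidableRel G.Adj]
    (Δ d : ℕ) (hΔ : 0 < Δ) (hd : d < Δ)
    (hmax : ∀ v : V, G.degree v ≤ Δ)
    (n : ℝ) (hn : n = (Fintype.card V : ℝ))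
    (m : ℝ) (hm : m = (G.edgeFinset.card : ℝ))
    (h1 : 2 * (Δ : ℝ) * d / ((Δ : ℝ) + d) ≤ 2 * m / n)
    (h2 : 2 * m / n ≤ 2 * (Δ : ℝ) * (d + 1) / ((Δ : ℝ) + d + 1)) :
    (irr G : ℝ) ≤ (d : ℝ) * (d + 1) * n +
      (1 / (Δ : ℝ)) * ((Δ : ℝ) ^ 2 - (2 * d + 1) * Δ - (d : ℝ) ^ 2 - d) * m := by
  subst hn hm
  simpa only [Int.cast_natCast] using
    stmt_0_general G (Nat.cast_pos.mpr hΔ) (fun v => Nat.cast_le.mpr (hmax v)) (d : ℤ)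
end

section
/- Let Δ be a positive integer and let G be a finite simple graph with n ≥ 1 vertices, m edges, and maximum degree at most Δ. Then irr(G) ≤ (Δn − 2m)·Δ·m / (Δn − m). -/
open Finset SimpleGraph

/-! For an edge `uv` put `y(uv) = Δ (1 / d(u) + 1 / d(v)) - 1 ≥ 1`. Each edge satisfies
`|d(u) - d(v)| ≤ Δ (1 - 1 / y(uv))`, with equality as soon as the larger degree is `Δ`. A
non-isolated vertex `v` contributes `1 / d(v)` to exactly `d(v)` edges, so the `y(uv)` add up to
`Δ k - m`, where `k ≤ n` is the number of non-isolated vertices. By Cauchy–Schwarz the `1 / y(uv)`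
add up to at least `m² / (Δ n - m)`, whence `irr G ≤ Δ (m - m² / (Δ n - m))`. -/

section EdgeInequality

variable {𝕜 : Type*} [Field 𝕜] [LinearOrder 𝕜] [IsStrictOrderedRing 𝕜] {a b c : 𝕜}

lemma one_le_mul_inv_add_inv_sub_one (ha : 0 < a) (hb : 0 < b) (hac : a ≤ c) (hbc : b ≤ c) :
    1 ≤ c * (a⁻¹ + b⁻¹) - 1 := by
  have one_le_left : 1 ≤ c * a⁻¹ := by rwa [← div_eq_mul_inv, one_le_div ha]
  have one_le_right : 1 ≤ c * b⁻¹ := by rwa [← div_eq_mul_inv, one_le_div hb]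
  linarith [mul_add c a⁻¹ b⁻¹]

lemma sub_le_mul_one_sub_inv (hb : 0 < b) (hba : b ≤ a) (hac : a ≤ c) :
    a - b ≤ c * (1 - (c * (a⁻¹ + b⁻¹) - 1)⁻¹) := by
  have ha : 0 < a := hb.trans_le hba
  have hc : 0 < c := ha.trans_le hac
  have denom_pos : 0 < c * (a + b) - a * b := by
    nlinarith [mul_le_mul_of_nonneg_right hac hb.le, mul_pos hc ha]
  have inv_eq : (c * (a⁻¹ + b⁻¹) - 1)⁻¹ = a * b / (c * (a + b) - a * b) := by
    rw [← inv_div]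
    congr 1
    field_simp
    ring
  have gap_eq : c * (1 - a * b / (c * (a + b) - a * b)) - (a - b) =
      (c - a) * (c * (a + b) - b * (a - b)) / (c * (a + b) - a * b) := by
    field_simp
    ring
  have factor_nonneg : 0 ≤ c * (a + b) - b * (a - b) := by nlinarith [mul_pos hb hb]
  rw [inv_eq, ← sub_nonneg, gap_eq]
  exact div_nonneg (mul_nonneg (sub_nonneg.2 hac) factor_nonneg) denom_pos.le

lemma abs_sub_le_mul_one_sub_inv (ha : 0 < a) (hb : 0 < b) (hac : a ≤ c) (hbc : b ≤ c) :
    |a - b| ≤ c * (1 - (c * (a⁻¹ + b⁻¹) - 1)⁻¹) := by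
  rcases le_total b a with hba | hab
  · rw [abs_of_nonneg (sub_nonneg.2 hba)]
    exact sub_le_mul_one_sub_inv hb hba hac
  · rw [abs_sub_comm, abs_of_nonneg (sub_nonneg.2 hab), add_comm a⁻¹]
    exact sub_le_mul_one_sub_inv ha hab hbc

lemma card_sq_le_sum_mul_sum_inv {ι : Type*} (s : Finset ι) {y : ι → 𝕜}
    (hy : ∀ i ∈ s, 0 < y i) : (#s : 𝕜) ^ 2 ≤ (∑ i ∈ s, y i) * ∑ i ∈ s, (y i)⁻¹ := by
  simpa only [sum_const, nsmul_eq_mul, mul_one] using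
    sum_sq_le_sum_mul_sum_of_sq_le_mul s (r := fun _ ↦ 1) (fun i hi ↦ (hy i hi).le)
      (fun i hi ↦ (inv_pos.2 (hy i hi)).le)
      fun i hi ↦ by rw [mul_inv_cancel₀ (hy i hi).ne', one_pow]

end EdgeInequality

section EndpointSums

variable {V : Type*} [Fintype V] (G : SimpleGraph V) [DecidableRel G.Adj]

lemma sum_edgeFinset_add_map {M : Type*} [AddCommMonoid M] (f : V → M) :
    ∑ e ∈ G.edgeFinset, (e.map f).add = ∑ v, G.degree v • f v := by
  classical
  have add_map_eq : ∀ e ∈ G.edgeFinset, (e.map f).add = ∑ v, if v ∈ e then f v else 0 := by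
    intro e he
    induction e with
    | _ u v =>
      have huv : u ≠ v := (G.mem_edgeFinset.1 he).ne
      have filter_eq : ({w | w ∈ s(u, v)} : Finset V) = {u, v} := by ext; simp
      rw [← sum_filter, filter_eq, sum_pair huv, Sym2.map_mk, Sym2.add_mk]
  rw [sum_congr rfl add_map_eq, sum_comm]
  refine sum_congr rfl fun v _ ↦ ?_
  rw [← sum_filter, sum_const, ← incidenceFinset_eq_filter, card_incidenceFinset_eq_degree]

lemma sum_edgeFinset_add_map_inv_degree (𝕜 : Type*) [Field 𝕜] [CharZero 𝕜] :
    ∑ e ∈ G.edgeFinset, (e.map fun v ↦ (G.degree v : 𝕜)⁻¹).add = G.support.ncard := by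
  classical
  have smul_inv_eq (v : V) :
      G.degree v • (G.degree v : 𝕜)⁻¹ = if v ∈ G.support then 1 else 0 := by
    rw [nsmul_eq_mul]
    split_ifs with hv
    · exact mul_inv_cancel₀ (Nat.cast_ne_zero.2 ((G.degree_pos_iff_mem_support v).2 hv).ne')
    · rw [(G.degree_eq_zero_iff_notMem_support v).2 hv, Nat.cast_zero, zero_mul]
  rw [sum_edgeFinset_add_map, sum_congr rfl fun v _ ↦ smul_inv_eq v, sum_boole,
    ← Set.ncard_coe_finset, coe_filter_univ, Set.ofPred_mem_eq]

end EndpointSums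

section EdgeWeight

variable {V : Type*} [Fintype V] (G : SimpleGraph V) [DecidableRel G.Adj]

/-- The weight `Δ (1 / d(u) + 1 / d(v)) - 1` of an edge `uv`, whose reciprocal controls the
contribution of `uv` to the irregularity of a graph of maximum degree at most `Δ`. -/
noncomputable def edgeWeight (Δ : ℝ) (e : Sym2 V) : ℝ :=
  Δ * (e.map fun v ↦ (G.degree v : ℝ)⁻¹).add - 1

lemma sum_edgeWeight (Δ : ℝ) :
    ∑ e ∈ G.edgeFinset, edgeWeight G Δ e = Δ * G.support.ncard - #G.edgeFinset := by
  simp only [edgeWeight, sum_sub_distrib, ← mul_sum, sum_edgeFinset_add_map_inv_degree,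
    sum_const, nsmul_eq_mul, mul_one]

variable {G} {Δ : ℝ}

lemma one_le_edgeWeight (hmax : ∀ v, (G.degree v : ℝ) ≤ Δ) {e : Sym2 V} (he : e ∈ G.edgeFinset) :
    1 ≤ edgeWeight G Δ e := by
  induction e with
  | _ u v =>
    have huv : G.Adj u v := G.mem_edgeFinset.1 he
    exact one_le_mul_inv_add_inv_sub_one (Nat.cast_pos.2 huv.degree_pos_left)
      (Nat.cast_pos.2 huv.degree_pos_right) (hmax u) (hmax v)

lemma irr_le_sum_edgeWeight (hmax : ∀ v, (G.degree v : ℝ) ≤ Δ) :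
    (irr G : ℝ) ≤ ∑ e ∈ G.edgeFinset, Δ * (1 - (edgeWeight G Δ e)⁻¹) := by
  rw [irr, Int.cast_sum]
  refine sum_le_sum fun e he ↦ ?_
  induction e with
  | _ u v =>
    have huv : G.Adj u v := G.mem_edgeFinset.1 he
    simpa only [edgeWeight, Sym2.map_mk, Sym2.add_mk, Sym2.lift_mk, Int.cast_abs, Int.cast_sub,
      Int.cast_natCast] using
      abs_sub_le_mul_one_sub_inv (Nat.cast_pos.2 huv.degree_pos_left)
        (Nat.cast_pos.2 huv.degree_pos_right) (hmax u) (hmax v)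

end EdgeWeight

theorem stmt_2_general {V : Type*} [Fintype V] (G : SimpleGraph V) [DecidableRel G.Adj]
    {Δ : ℝ} (hΔ : 0 < Δ) (hmax : ∀ v, (G.degree v : ℝ) ≤ Δ)
    {n : ℝ} (hn : 0 < n) (hsupport : (G.support.ncard : ℝ) ≤ n)
    {m : ℝ} (hm : m = #G.edgeFinset) :
    (irr G : ℝ) ≤ (Δ * n - 2 * m) * Δ * m / (Δ * n - m) := by
  have sum_weight_le : ∑ e ∈ G.edgeFinset, edgeWeight G Δ e ≤ Δ * n - m := by
    rw [sum_edgeWeight, ← hm]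
    gcongr
  have le_sum_weight : m ≤ ∑ e ∈ G.edgeFinset, edgeWeight G Δ e := by
    simpa [hm] using card_nsmul_le_sum _ _ 1 fun e he ↦ one_le_edgeWeight hmax he
  have weight_pos : ∀ e ∈ G.edgeFinset, 0 < edgeWeight G Δ e :=
    fun e he ↦ one_pos.trans_le (one_le_edgeWeight hmax he)
  have denom_pos : 0 < Δ * n - m := by linarith [mul_pos hΔ hn]
  have le_sum_inv : m ^ 2 / (Δ * n - m) ≤ ∑ e ∈ G.edgeFinset, (edgeWeight G Δ e)⁻¹ := by
    rw [div_le_iff₀' denom_pos, hm]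
    refine (card_sq_le_sum_mul_sum_inv _ weight_pos).trans ?_
    rw [← hm]
    exact mul_le_mul_of_nonneg_right sum_weight_le
      (sum_nonneg fun e he ↦ (inv_pos.2 (weight_pos e he)).le)
  calc (irr G : ℝ) ≤ ∑ e ∈ G.edgeFinset, Δ * (1 - (edgeWeight G Δ e)⁻¹) :=
        irr_le_sum_edgeWeight hmax
    _ = Δ * (m - ∑ e ∈ G.edgeFinset, (edgeWeight G Δ e)⁻¹) := by
        simp [← mul_sum, sum_sub_distrib, hm]
    _ ≤ Δ * (m - m ^ 2 / (Δ * n - m)) := by gcongr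
    _ = (Δ * n - 2 * m) * Δ * m / (Δ * n - m) := by
        field_simp
        ring

theorem stmt_2 {V : Type*} [Fintype V] [Nonempty V] (G : SimpleGraph V) [DecidableRel G.Adj]
    (Δ : ℕ) (hΔ : 0 < Δ)
    (hmax : ∀ v : V, G.degree v ≤ Δ)
    (n : ℝ) (hn : n = (Fintype.card V : ℝ))
    (m : ℝ) (hm : m = (G.edgeFinset.card : ℝ)) :
    (irr G : ℝ) ≤ ((Δ : ℝ) * n - 2 * m) * Δ * m / ((Δ : ℝ) * n - m) := by
  have support_le : G.support.ncard ≤ Fintype.card V := by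
    simpa only [Nat.card_eq_fintype_card] using Set.ncard_le_card G.support
  exact stmt_2_general G (Nat.cast_pos.2 hΔ) (fun v ↦ Nat.cast_le.2 (hmax v))
    (hn ▸ Nat.cast_pos.2 Fintype.card_pos) (hn ▸ Nat.cast_le.2 support_le) hm
end

section
/- Let Δ be a positive integer and let G be a finite simple graph with n ≥ 1 vertices and maximum degree at most Δ. Then irr(G) < (3 − 2√2)·Δ²·n. -/
open Finset SimpleGraph

/-!
The inequality `|a - b| ≤ (3 - 2√2) Δ² (1 / a + 1 / b)` for `0 < a, b ≤ Δ` lets an edge `uv` charge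
a multiple of `1 / d(u)` to `u` and of `1 / d(v)` to `v`, so that every vertex is charged at most
`(3 - 2√2) Δ²` in total. Since `3 - 2√2 = (√2 - 1)²`, for `b ≤ a = Δ` the two sides, multiplied
by `b`, differ by the square `((√2 - 1) a - b)²`, which does not vanish at integers because `√2` is
irrational.
-/

section RealInequality

lemma three_sub_two_mul_sqrt_two : 3 - 2 * √2 = (√2 - 1) ^ 2 := by
  linear_combination -Real.sq_sqrt zero_le_two

lemma three_sub_two_mul_sqrt_two_pos : 0 < 3 - 2 * √2 := by
  rw [three_sub_two_mul_sqrt_two]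
  exact pow_pos (sub_pos.2 Real.one_lt_sqrt_two) 2

lemma sub_lt_sq_mul_inv_add_inv {a b : ℝ} (ha : a ≠ 0) (hb : 0 < b) (hne : (√2 - 1) * a ≠ b) :
    a - b < (3 - 2 * √2) * a ^ 2 * (a⁻¹ + b⁻¹) := by
  have hsq : 0 < ((√2 - 1) * a - b) ^ 2 := pow_two_pos_of_ne_zero (sub_ne_zero.2 hne)
  have hdiff : (3 - 2 * √2) * a ^ 2 * (a⁻¹ + b⁻¹) - (a - b) = ((√2 - 1) * a - b) ^ 2 / b := by
    rw [three_sub_two_mul_sqrt_two]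
    field_simp
    linear_combination a * b * Real.sq_sqrt zero_le_two
  rw [← sub_pos, hdiff]
  exact div_pos hsq hb

lemma sqrt_two_sub_one_mul_natCast_ne_natCast {a : ℕ} (ha : a ≠ 0) (b : ℕ) :
    (√2 - 1) * a ≠ b := by
  have hirr : Irrational (√2 - 1) := mod_cast irrational_sqrt_two.sub_natCast 1
  exact (hirr.mul_natCast ha).ne_nat b

lemma abs_natCast_sub_lt_sq_mul_inv_add_inv {a b D : ℕ} (ha : 0 < a) (hb : 0 < b) (haD : a ≤ D)
    (hbD : b ≤ D) : |(a : ℝ) - b| < (3 - 2 * √2) * D ^ 2 * ((a : ℝ)⁻¹ + (b : ℝ)⁻¹) := by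
  wlog hab : b ≤ a generalizing a b
  · rw [abs_sub_comm, add_comm]
    exact this hb ha hbD haD (le_of_not_ge hab)
  have hc := three_sub_two_mul_sqrt_two_pos
  calc |(a : ℝ) - b| = a - b := abs_of_nonneg (sub_nonneg.2 (mod_cast hab))
    _ < (3 - 2 * √2) * a ^ 2 * ((a : ℝ)⁻¹ + (b : ℝ)⁻¹) :=
      sub_lt_sq_mul_inv_add_inv (mod_cast ha.ne') (mod_cast hb)
        (sqrt_two_sub_one_mul_natCast_ne_natCast ha.ne' b)
    _ ≤ (3 - 2 * √2) * D ^ 2 * ((a : ℝ)⁻¹ + (b : ℝ)⁻¹) := by gcongr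

end RealInequality

section Graph

variable {V : Type*} [Fintype V] (G : SimpleGraph V) [DecidableRel G.Adj]

variable {G}

lemma irr_eq_zero_of_eq_bot (hG : G = ⊥) : irr G = 0 := by
  rw [irr, edgeFinset_eq_empty.2 hG, sum_empty]

lemma irr_lt_sum_degree_mul {R : Type*} [Ring R] [LinearOrder R] [IsStrictOrderedRing R]
    (hG : G ≠ ⊥) {f : V → R}
    (hf : ∀ u v, G.Adj u v → |(G.degree u : R) - G.degree v| < f u + f v) :
    (irr G : R) < ∑ v, G.degree v * f v := by
  classical
  simp only [← nsmul_eq_mul]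
  rw [← sum_edgeFinset_sum_toFinset, irr, Int.cast_sum]
  refine sum_lt_sum_of_nonempty (edgeFinset_nonempty.2 hG) fun e => ?_
  induction e with
  | _ u v =>
    intro he
    have huv : G.Adj u v := by simpa using he
    simpa [Sym2.toFinset_mk_eq, sum_pair huv.ne] using hf u v huv

end Graph

theorem stmt_3 {V : Type*} [Fintype V] [Nonempty V] (G : SimpleGraph V) [DecidableRel G.Adj]
    (Δ : ℕ) (hΔ : 0 < Δ)
    (hmax : ∀ v : V, G.degree v ≤ Δ) :
    (irr G : ℝ) < (3 - 2 * Real.sqrt 2) * (Δ : ℝ) ^ 2 * (Fintype.card V : ℝ) := by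
  set C : ℝ := (3 - 2 * √2) * (Δ : ℝ) ^ 2
  have hC : 0 < C := mul_pos three_sub_two_mul_sqrt_two_pos (by positivity)
  rcases eq_or_ne G ⊥ with hG | hG
  · rw [irr_eq_zero_of_eq_bot hG, Int.cast_zero]
    exact mul_pos hC (mod_cast Fintype.card_pos)
  have hedge (u v : V) (huv : G.Adj u v) :
      |(G.degree u : ℝ) - G.degree v| < C * (G.degree u : ℝ)⁻¹ + C * (G.degree v : ℝ)⁻¹ := by
    rw [← mul_add]
    exact abs_natCast_sub_lt_sq_mul_inv_add_inv huv.degree_pos_left huv.degree_pos_right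
      (hmax u) (hmax v)
  calc (irr G : ℝ) < ∑ v, G.degree v * (C * (G.degree v : ℝ)⁻¹) := irr_lt_sum_degree_mul hG hedge
    _ = C * ∑ v, (G.degree v : ℝ) * (G.degree v : ℝ)⁻¹ := by
      simp only [mul_left_comm, mul_sum]
    _ ≤ C * ∑ _v : V, 1 := by
      gcongr
      exact mul_inv_le_one
    _ = C * Fintype.card V := by simp
end

section
/- Let Δ > δ ≥ 0 be integers and let G be a finite simple graph with n vertices, maximum degree at most Δ, and minimum degree at least δ. Let δ* ∈ {δ, δ+1, ..., Δ} be an integer maximizing the quantity Δ(Δ−i)i/(Δ+i) over all i ∈ {δ, ..., Δ}. Then irr(G) ≤ (Δ(Δ−δ*)δ*/(Δ+δ*))·n. -/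
open Finset SimpleGraph

/-!
Give every vertex `w` the charge `C`, where `C = Δ (Δ - δ*) δ* / (Δ + δ*)`, and let it send
`C / d(w)` to each of its edges, so that the edges receive at most `C n` in total. An edge whose
endpoints have degrees `a ≤ b` then receives `C (1 / a + 1 / b)`, and this is at least `b - a`
exactly when `b (b - a) a / (b + a) ≤ C`. The left-hand side increases with `b`, so it is at most
its value at `b = Δ`, which is at most `C` by the choice of `δ*`.
-/

section OrderedField

variable {K : Type*} [Field K] [LinearOrder K] [IsStrictOrderedRing K] {a b C D : K}

lemma monotoneOn_mul_sub_mul_div_add (ha : 0 < a) :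
    MonotoneOn (fun x => x * (x - a) * a / (x + a)) (Set.Ici a) := by
  intro b (hab : a ≤ b) D (haD : a ≤ D) hbD
  have hb : 0 < b := ha.trans_le hab
  have hD : 0 < D := ha.trans_le haD
  have hratio : b / (b + a) ≤ D / (D + a) := by
    rw [div_le_div_iff₀ (by positivity) (by positivity)]
    linarith [mul_le_mul_of_nonneg_right hbD ha.le]
  calc b * (b - a) * a / (b + a) = b / (b + a) * ((b - a) * a) := by ring
    _ ≤ D / (D + a) * ((D - a) * a) :=
      mul_le_mul hratio (by gcongr) (mul_nonneg (sub_nonneg.2 hab) ha.le) (by positivity)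
    _ = D * (D - a) * a / (D + a) := by ring

lemma sub_le_div_add_div (ha : 0 < a) (hab : a ≤ b) (hbD : b ≤ D)
    (hC : D * (D - a) * a / (D + a) ≤ C) : b - a ≤ C / a + C / b := by
  have hb : 0 < b := ha.trans_le hab
  calc b - a = b * (b - a) * a / (b + a) * (1 / a + 1 / b) := by field_simp
    _ ≤ C * (1 / a + 1 / b) := by
      gcongr
      exact (monotoneOn_mul_sub_mul_div_add ha hab (hab.trans hbD) hbD).trans hC
    _ = C / a + C / b := by ring

lemma abs_sub_le_div_add_div (ha : 0 < a) (hb : 0 < b) (haD : a ≤ D) (hbD : b ≤ D)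
    (haC : D * (D - a) * a / (D + a) ≤ C) (hbC : D * (D - b) * b / (D + b) ≤ C) :
    |a - b| ≤ C / a + C / b := by
  rcases le_total a b with hab | hba
  · rw [abs_sub_comm, abs_of_nonneg (sub_nonneg.2 hab)]
    exact sub_le_div_add_div ha hab hbD haC
  · rw [abs_of_nonneg (sub_nonneg.2 hba), add_comm]
    exact sub_le_div_add_div hb hba haD hbC

end OrderedField

section Graph

variable {V : Type*} [Fintype V] (G : SimpleGraph V) [DecidableRel G.Adj]

lemma intCast_irr_le_sum_degree_nsmul {K : Type*} [Ring K] [LinearOrder K] [IsStrictOrderedRing K]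
    {f : V → K} (hf : ∀ ⦃u v⦄, G.Adj u v → |(G.degree u : K) - G.degree v| ≤ f u + f v) :
    (irr G : K) ≤ ∑ v, G.degree v • f v := by
  classical
  rw [irr, Int.cast_sum, ← sum_edgeFinset_sum_toFinset]
  refine sum_le_sum fun e he => ?_
  induction e with
  | _ u v =>
    have huv : G.Adj u v := by simpa using he
    simpa [Sym2.toFinset_mk_eq, sum_pair huv.ne] using hf huv

theorem stmt_4_general {K : Type*} [Field K] [LinearOrder K] [IsStrictOrderedRing K] {C D : K}
    (hD : ∀ v, (G.degree v : K) ≤ D)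
    (hC : ∀ v, D * (D - G.degree v) * G.degree v / (D + G.degree v) ≤ C) :
    (irr G : K) ≤ C * Fintype.card V := by
  have hedge : ∀ ⦃u v⦄, G.Adj u v →
      |(G.degree u : K) - G.degree v| ≤ C / G.degree u + C / G.degree v := fun u v huv =>
    abs_sub_le_div_add_div (Nat.cast_pos.2 huv.degree_pos_left)
      (Nat.cast_pos.2 huv.degree_pos_right) (hD u) (hD v) (hC u) (hC v)
  have hvertex (v : V) : G.degree v • (C / G.degree v : K) ≤ C := by
    rcases eq_or_ne (G.degree v) 0 with hv | hv
    · -- At an isolated vertex `hC v` reads `0 ≤ C`.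
      simpa [hv] using hC v
    · rw [nsmul_eq_mul, mul_div_cancel₀ _ (Nat.cast_ne_zero.2 hv)]
  calc (irr G : K) ≤ ∑ v, G.degree v • (C / G.degree v : K) :=
        intCast_irr_le_sum_degree_nsmul G hedge
    _ ≤ ∑ _v : V, C := sum_le_sum fun v _ => hvertex v
    _ = C * Fintype.card V := by simp [mul_comm]

end Graph

theorem stmt_4 {V : Type*} [Fintype V] (G : SimpleGraph V) [DecidableRel G.Adj]
    (Δ δ : ℕ) (hδΔ : δ < Δ)
    (hmax : ∀ v : V, G.degree v ≤ Δ)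
    (hmin : ∀ v : V, δ ≤ G.degree v)
    (δs : ℕ) (hδs₁ : δ ≤ δs) (hδs₂ : δs ≤ Δ)
    (hδsmax : ∀ i : ℕ, δ ≤ i → i ≤ Δ →
      (Δ : ℝ) * ((Δ : ℝ) - i) * i / ((Δ : ℝ) + i) ≤
        (Δ : ℝ) * ((Δ : ℝ) - δs) * δs / ((Δ : ℝ) + δs)) :
    (irr G : ℝ) ≤
      (Δ : ℝ) * ((Δ : ℝ) - δs) * δs / ((Δ : ℝ) + δs) * (Fintype.card V : ℝ) := by
  exact stmt_4_general G (fun v => Nat.cast_le.2 (hmax v)) fun v => hδsmax _ (hmin v) (hmax v)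
end

section
/- Let Δ be a positive integer. Then there exists an integer i* ∈ {⌊(√2−1)Δ⌋, ⌈(√2−1)Δ⌉} such that for every integer i with 0 ≤ i ≤ Δ one has Δ(Δ−i)i/(Δ+i) ≤ Δ(Δ−i*)i*/(Δ+i*). -/
/-!
In terms of `u = Δ + t`, the objective `Δ(Δ - t)t / (Δ + t)` is `Δ(3Δ - (u + 2Δ² / u))`. On the
positive half-line `u + 2Δ² / u` decreases up to `u = √2 Δ` and increases afterwards, so the
objective increases up to `t = (√2 - 1)Δ` and decreases afterwards; hence its best integer argument
is one of the two integers next to this turning point.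
-/

open Set

section Unimodal

variable {R β : Type*} [Ring R] [LinearOrder R] [IsOrderedRing R] [FloorRing R] [LinearOrder β]

lemma exists_floor_or_ceil_isMaxOn {f : R → β} {s : Set R} [s.OrdConnected] {x : R} (hx : x ∈ s)
    (hmono : MonotoneOn f (s ∩ Iic x)) (hanti : AntitoneOn f (s ∩ Ici x)) :
    ∃ n : ℤ, (n = ⌊x⌋ ∨ n = ⌈x⌉) ∧ IsMaxOn (fun i : ℤ ↦ f i) {i : ℤ | (i : R) ∈ s} n := by
  have le_floor_or_le_ceil (i : ℤ) (hi : (i : R) ∈ s) : f i ≤ f ⌊x⌋ ∨ f i ≤ f ⌈x⌉ := by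
    rcases le_total (i : R) x with hix | hxi
    · have hi_floor : (i : R) ≤ ⌊x⌋ := Int.cast_le.2 (Int.le_floor.2 hix)
      have hfloor : (⌊x⌋ : R) ∈ s := s.Icc_subset hi hx ⟨hi_floor, Int.floor_le x⟩
      exact .inl (hmono ⟨hi, hix⟩ ⟨hfloor, Int.floor_le x⟩ hi_floor)
    · have hceil_i : (⌈x⌉ : R) ≤ i := Int.cast_le.2 (Int.ceil_le.2 hxi)
      have hceil : (⌈x⌉ : R) ∈ s := s.Icc_subset hx hi ⟨Int.le_ceil x, hceil_i⟩
      exact .inr (hanti ⟨hceil, Int.le_ceil x⟩ ⟨hi, hxi⟩ hceil_i)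
  rcases le_total (f ⌊x⌋) (f ⌈x⌉) with h | h
  · exact ⟨⌈x⌉, .inr rfl, fun i hi ↦ (le_floor_or_le_ceil i hi).elim (·.trans h) id⟩
  · exact ⟨⌊x⌋, .inl rfl, fun i hi ↦ (le_floor_or_le_ceil i hi).elim id (·.trans h)⟩

end Unimodal

section AddDiv

variable {K : Type*} [Field K]

lemma add_div_sub_add_div (c : K) {u v : K} (hu : u ≠ 0) (hv : v ≠ 0) :
    (u + c / u) - (v + c / v) = (v - u) * (c - u * v) / (u * v) := by
  field_simp
  ring

lemma mul_sub_mul_div_add_eq {d t : K} (h : d + t ≠ 0) :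
    d * (d - t) * t / (d + t) = d * (3 * d - ((d + t) + 2 * d ^ 2 / (d + t))) := by
  field_simp
  ring

variable [LinearOrder K] [IsStrictOrderedRing K]

lemma antitoneOn_add_div {c r : K} (hr : r ^ 2 ≤ c) :
    AntitoneOn (fun u ↦ u + c / u) (Ioc 0 r) := by
  rintro u ⟨hu, hur⟩ v ⟨hv, hvr⟩ huv
  have huv_le : u * v ≤ c := calc
    u * v ≤ r * r := mul_le_mul hur hvr hv.le (hu.le.trans hur)
    _ = r ^ 2 := (sq r).symm
    _ ≤ c := hr
  rw [← sub_nonneg, add_div_sub_add_div c hu.ne' hv.ne']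
  exact div_nonneg (mul_nonneg (sub_nonneg.2 huv) (sub_nonneg.2 huv_le)) (mul_pos hu hv).le

lemma monotoneOn_add_div {c r : K} (hr₀ : 0 < r) (hr : c ≤ r ^ 2) :
    MonotoneOn (fun u ↦ u + c / u) (Ici r) := by
  intro u hu v hv huv
  have hu₀ : 0 < u := hr₀.trans_le hu
  have hv₀ : 0 < v := hr₀.trans_le hv
  have le_huv : c ≤ u * v := calc
    c ≤ r ^ 2 := hr
    _ = r * r := sq r
    _ ≤ u * v := mul_le_mul hu hv hr₀.le hu₀.le
  rw [← sub_nonpos, add_div_sub_add_div c hu₀.ne' hv₀.ne']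
  exact div_nonpos_of_nonpos_of_nonneg
    (mul_nonpos_of_nonneg_of_nonpos (sub_nonneg.2 huv) (sub_nonpos.2 le_huv)) (mul_pos hu₀ hv₀).le

lemma monotoneOn_mul_sub_mul_div_add_s9 {d x : K} (hd : 0 ≤ d) (hx : (d + x) ^ 2 ≤ 2 * d ^ 2) :
    MonotoneOn (fun t ↦ d * (d - t) * t / (d + t)) (Ioc (-d) x) := by
  rintro a ⟨ha, hax⟩ b ⟨hb, hbx⟩ hab
  have ha₀ : 0 < d + a := neg_lt_iff_pos_add'.1 ha
  have hb₀ : 0 < d + b := neg_lt_iff_pos_add'.1 hb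
  simp only [mul_sub_mul_div_add_eq ha₀.ne', mul_sub_mul_div_add_eq hb₀.ne']
  gcongr d * (3 * d - ?_)
  exact antitoneOn_add_div hx ⟨ha₀, by gcongr⟩ ⟨hb₀, by gcongr⟩ (by gcongr)

lemma antitoneOn_mul_sub_mul_div_add {d x : K} (hd : 0 ≤ d) (hdx : -d < x)
    (hx : 2 * d ^ 2 ≤ (d + x) ^ 2) :
    AntitoneOn (fun t ↦ d * (d - t) * t / (d + t)) (Ici x) := by
  intro a ha b hb hab
  have hx₀ : 0 < d + x := neg_lt_iff_pos_add'.1 hdx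
  have hxa : d + x ≤ d + a := add_le_add_right ha d
  have hxb : d + x ≤ d + b := add_le_add_right hb d
  simp only [mul_sub_mul_div_add_eq (hx₀.trans_le hxa).ne',
    mul_sub_mul_div_add_eq (hx₀.trans_le hxb).ne']
  gcongr d * (3 * d - ?_)
  exact monotoneOn_add_div hx₀ hx hxa hxb (by gcongr)

end AddDiv

theorem stmt_9_general {Δ : ℝ} (hΔ : 0 < Δ) :
    ∃ n : ℤ, (n = ⌊(√2 - 1) * Δ⌋ ∨ n = ⌈(√2 - 1) * Δ⌉) ∧
      ∀ i : ℤ, -Δ < i → Δ * (Δ - i) * i / (Δ + i) ≤ Δ * (Δ - n) * n / (Δ + n) := by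
  have hcrit : (Δ + (√2 - 1) * Δ) ^ 2 = 2 * Δ ^ 2 := calc
    (Δ + (√2 - 1) * Δ) ^ 2 = √2 ^ 2 * Δ ^ 2 := by ring
    _ = 2 * Δ ^ 2 := by rw [Real.sq_sqrt zero_le_two]
  have hmem : -Δ < (√2 - 1) * Δ := by
    have : 0 < √2 * Δ := by positivity
    linarith
  exact exists_floor_or_ceil_isMaxOn (s := Ioi (-Δ)) hmem
    (monotoneOn_mul_sub_mul_div_add_s9 hΔ.le hcrit.le)
    ((antitoneOn_mul_sub_mul_div_add hΔ.le hmem hcrit.ge).mono inter_subset_right)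

theorem stmt_9 (Δ : ℕ) (hΔ : 0 < Δ) :
    ∃ is : ℤ, (is = ⌊(Real.sqrt 2 - 1) * Δ⌋ ∨ is = ⌈(Real.sqrt 2 - 1) * Δ⌉) ∧
      ∀ i : ℤ, 0 ≤ i → i ≤ (Δ : ℤ) →
        (Δ : ℝ) * ((Δ : ℝ) - i) * i / ((Δ : ℝ) + i) ≤
          (Δ : ℝ) * ((Δ : ℝ) - is) * is / ((Δ : ℝ) + is) := by
  obtain ⟨n, hn, hmax⟩ := stmt_9_general (Nat.cast_pos (α := ℝ).2 hΔ)
  exact ⟨n, hn, fun i hi _ ↦ hmax i <|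
    (neg_lt_zero.2 (Nat.cast_pos.2 hΔ)).trans_le (Int.cast_nonneg hi)⟩
end

section
/- Let Δ and d be integers with 1 ≤ d ≤ Δ−1. The complete bipartite graph K_{Δ,d}, which has n = Δ+d vertices, m = Δd edges, and maximum degree Δ, satisfies 2Δd/(Δ+d) ≤ 2m/n ≤ 2Δ(d+1)/(Δ+d+1) and irr(K_{Δ,d}) = d(d+1)·n + (1/Δ)·(Δ² − (2d+1)Δ − d² − d)·m, i.e., the bound of the main theorem holds with equality for K_{Δ,d} with parameter d. -/
open Finset SimpleGraph

instance {α β : Type*} : DecidableRel (completeBipartiteGraph α β).Adj := fun v w => by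
  simp only [completeBipartiteGraph]; infer_instance

/-! Every edge of `K_{Δ,d}` joins a vertex of degree `d` to one of degree `Δ`, so each of the `Δd`
edges contributes `Δ - d` to the irregularity. The average degree is exactly `2Δd / (Δ + d)`, the
left end of the interval in question, and `x ↦ x / (Δ + x)` is increasing. -/

lemma irr_eq_card_edgeFinset_mul {V : Type*} [Fintype V] {G : SimpleGraph V} [DecidableRel G.Adj]
    {k : ℤ} (h : ∀ u v, G.Adj u v → |(G.degree u : ℤ) - G.degree v| = k) :
    irr G = #G.edgeFinset * k := by
  rw [irr, ← nsmul_eq_mul]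
  refine sum_eq_card_nsmul fun e he => ?_
  induction e with
  | _ u v => exact h u v (mem_edgeFinset.mp he)

section CompleteBipartiteGraph

variable {V W : Type*}

lemma degree_completeBipartiteGraph_inl [Fintype W] (v : V)
    [Fintype ((completeBipartiteGraph V W).neighborSet (Sum.inl v))] :
    (completeBipartiteGraph V W).degree (Sum.inl v) = Fintype.card W := by
  have neighborFinset_eq :
      (completeBipartiteGraph V W).neighborFinset (Sum.inl v) = univ.map .inr := by
    ext (_ | _) <;> simp
  rw [← card_neighborFinset_eq_degree, neighborFinset_eq, card_map, card_univ]

lemma degree_completeBipartiteGraph_inr [Fintype V] (w : W)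
    [Fintype ((completeBipartiteGraph V W).neighborSet (Sum.inr w))] :
    (completeBipartiteGraph V W).degree (Sum.inr w) = Fintype.card V := by
  have neighborFinset_eq :
      (completeBipartiteGraph V W).neighborFinset (Sum.inr w) = univ.map .inl := by
    ext (_ | _) <;> simp
  rw [← card_neighborFinset_eq_degree, neighborFinset_eq, card_map, card_univ]

variable [Fintype V] [Fintype W]

lemma card_edgeFinset_completeBipartiteGraph [Fintype (completeBipartiteGraph V W).edgeSet] :
    #(completeBipartiteGraph V W).edgeFinset = Fintype.card V * Fintype.card W := by
  have h := encard_edgeSet_completeBipartiteGraph (W₁ := V) (W₂ := W)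
  rw [← coe_edgeFinset, Set.encard_coe_eq_coe_finsetCard, ENat.card_eq_coe_fintype_card,
    ENat.card_eq_coe_fintype_card] at h
  exact_mod_cast h

lemma irr_completeBipartiteGraph [DecidableRel (completeBipartiteGraph V W).Adj] :
    irr (completeBipartiteGraph V W) =
      Fintype.card V * Fintype.card W * |(Fintype.card V : ℤ) - Fintype.card W| := by
  rw [irr_eq_card_edgeFinset_mul (k := |(Fintype.card V : ℤ) - Fintype.card W|),
    card_edgeFinset_completeBipartiteGraph, Nat.cast_mul]
  rintro (v | w) (v' | w') hadj
  · simp at hadj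
  · rw [degree_completeBipartiteGraph_inl, degree_completeBipartiteGraph_inr, abs_sub_comm]
  · rw [degree_completeBipartiteGraph_inl, degree_completeBipartiteGraph_inr]
  · simp at hadj

end CompleteBipartiteGraph

lemma div_add_le_div_add_of_le {K : Type*} [Field K] [LinearOrder K] [IsStrictOrderedRing K]
    {a b c : K} (ha : 0 < a) (hb : 0 ≤ b) (hbc : b ≤ c) : b / (a + b) ≤ c / (a + c) := by
  have hc : 0 ≤ c := hb.trans hbc
  rw [div_le_div_iff₀ (by positivity) (by positivity)]
  calc b * (a + c) = b * a + b * c := mul_add b a c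
    _ ≤ c * a + b * c := by gcongr
    _ = c * (a + b) := by ring

lemma mul_mul_sub_eq_add_of_ne_zero {K : Type*} [Field K] {a : K} (ha : a ≠ 0) (b : K) :
    a * b * (a - b) =
      b * (b + 1) * (a + b) + 1 / a * (a ^ 2 - (2 * b + 1) * a - b ^ 2 - b) * (a * b) := by
  field_simp
  ring

theorem stmt_11_general {V W : Type*} [Fintype V] [Fintype W] [Nonempty W] {Δ d n m : ℕ}
    (hΔ : Fintype.card V = Δ) (hd : Fintype.card W = d) (hdΔ : d ≤ Δ)
    (hn : n = Δ + d) (hm : m = Δ * d) :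
    Fintype.card (V ⊕ W) = n ∧
    #(completeBipartiteGraph V W).edgeFinset = m ∧
    (∀ v, (completeBipartiteGraph V W).degree v ≤ Δ) ∧
    (∃ v, (completeBipartiteGraph V W).degree v = Δ) ∧
    2 * (Δ : ℝ) * d / ((Δ : ℝ) + d) ≤ 2 * (m : ℝ) / n ∧
    2 * (m : ℝ) / n ≤ 2 * (Δ : ℝ) * (d + 1) / ((Δ : ℝ) + d + 1) ∧
    (irr (completeBipartiteGraph V W) : ℝ) =
      (d : ℝ) * (d + 1) * n +
        (1 / (Δ : ℝ)) * ((Δ : ℝ) ^ 2 - (2 * d + 1) * Δ - (d : ℝ) ^ 2 - d) * m := by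
  have Δ_pos : (0 : ℝ) < Δ := by
    exact_mod_cast (hd ▸ Fintype.card_pos : 0 < d).trans_le hdΔ
  have average_degree : 2 * (m : ℝ) / n = 2 * (Δ : ℝ) * d / ((Δ : ℝ) + d) := by
    rw [hm, hn, Nat.cast_mul, Nat.cast_add, mul_assoc]
  refine ⟨by rw [Fintype.card_sum, hΔ, hd, hn],
    by rw [card_edgeFinset_completeBipartiteGraph, hΔ, hd, hm], ?_,
    ⟨.inr (Classical.arbitrary W), by rw [degree_completeBipartiteGraph_inr, hΔ]⟩,
    average_degree.ge, ?_, ?_⟩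
  · rintro (v | w)
    · rwa [degree_completeBipartiteGraph_inl, hd]
    · rw [degree_completeBipartiteGraph_inr, hΔ]
  · rw [average_degree, mul_div_assoc, mul_div_assoc, add_assoc]
    gcongr 2 * (Δ : ℝ) * ?_
    exact div_add_le_div_add_of_le Δ_pos d.cast_nonneg (le_add_of_nonneg_right zero_le_one)
  · have degree_gap_nonneg : (0 : ℝ) ≤ Δ - d := sub_nonneg.mpr (Nat.cast_le.mpr hdΔ)
    rw [irr_completeBipartiteGraph, hΔ, hd, hm, hn]
    push_cast
    rw [abs_of_nonneg degree_gap_nonneg, mul_mul_sub_eq_add_of_ne_zero Δ_pos.ne']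

theorem stmt_11 (Δ d : ℕ) (hd : 1 ≤ d) (hdΔ : d < Δ)
    (n m : ℕ) (hn : n = Δ + d) (hm : m = Δ * d) :
    Fintype.card (Fin Δ ⊕ Fin d) = n ∧
    (completeBipartiteGraph (Fin Δ) (Fin d)).edgeFinset.card = m ∧
    (∀ v, (completeBipartiteGraph (Fin Δ) (Fin d)).degree v ≤ Δ) ∧
    (∃ v, (completeBipartiteGraph (Fin Δ) (Fin d)).degree v = Δ) ∧
    2 * (Δ : ℝ) * d / ((Δ : ℝ) + d) ≤ 2 * (m : ℝ) / n ∧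
    2 * (m : ℝ) / n ≤ 2 * (Δ : ℝ) * (d + 1) / ((Δ : ℝ) + d + 1) ∧
    (irr (completeBipartiteGraph (Fin Δ) (Fin d)) : ℝ) =
      (d : ℝ) * (d + 1) * n +
        (1 / (Δ : ℝ)) * ((Δ : ℝ) ^ 2 - (2 * d + 1) * Δ - (d : ℝ) ^ 2 - d) * m := by
  have : Nonempty (Fin d) := Fin.pos_iff_nonempty.mp hd
  exact stmt_11_general (Fintype.card_fin Δ) (Fintype.card_fin d) hdΔ.le hn hm
end

section
/- Let Δ and d be integers with 1 ≤ Δ and 0 ≤ d ≤ Δ−1. Set x = d(d+1), y = (Δ² − (2d+1)Δ − d² − d)/(2Δ), and z_i = x/i + y for each integer 1 ≤ i ≤ Δ. Then z_i ≥ 0 for all 1 ≤ i ≤ Δ, z_i + z_j ≥ j − i for all 1 ≤ i < j ≤ Δ, and x + i·y ≥ i·z_i for all 1 ≤ i ≤ Δ. -/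
/-!
The value of `y` is chosen so that `2 * y = Δ - (2 * d + 1) - x / Δ`. No integer lies strictly
between `d` and `d + 1`, so `(i - d) * (i - d - 1) ≥ 0`, which after division by `i > 0` reads
`x / i ≥ 2 * d + 1 - i`. Together with `x / j ≥ x / Δ` this gives `z i + z j ≥ Δ - i` for all
indices `i` and `j`, equal or not: the case `i = j` yields `z i ≥ 0`, and `j ≤ Δ` yields the
pair constraints.
-/

section OrderedField

variable {K : Type*} [Field K] [LinearOrder K] [IsStrictOrderedRing K]

theorem intCast_mul_add_one_nonneg (d : ℤ) : (0 : K) ≤ d * (d + 1) := by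
  have h : 0 ≤ d * (d + 1) := by linarith [Int.le_self_sq (d + 1)]
  exact_mod_cast h

theorem two_mul_add_one_le_mul_add_one_div_add (d : ℤ) {i : ℤ} (hi : 0 < i) :
    (2 * d + 1 : K) ≤ d * (d + 1) / i + i := by
  have hi' : (0 : K) < i := by exact_mod_cast hi
  have hprod : (0 : K) ≤ (i - d) * (i - d - 1) := by
    have h : 0 ≤ (i - d) * (i - d - 1) := by linarith [Int.le_self_sq (i - d)]
    exact_mod_cast h
  rw [← sub_nonneg]
  calc (0 : K) ≤ (i - d) * (i - d - 1) / i := div_nonneg hprod hi'.le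
    _ = d * (d + 1) / i + i - (2 * d + 1) := by field_simp; ring

theorem sub_le_div_add_add_div_add {x y c Δ s t : K} (hx : 0 ≤ x)
    (hy : 2 * y = Δ - c - x / Δ) (hs : c ≤ x / s + s) (ht : 0 < t) (htΔ : t ≤ Δ) :
    Δ - s ≤ (x / s + y) + (x / t + y) := by
  have hdiv : x / Δ ≤ x / t := div_le_div_of_nonneg_left hx ht htΔ
  linarith

theorem stmt_18_general (Δ : K) (d : ℤ) (x y : K) (hx : x = d * (d + 1))
    (hy : y = (Δ ^ 2 - (2 * d + 1) * Δ - d ^ 2 - d) / (2 * Δ))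
    (z : ℕ → K) (hz : ∀ i : ℕ, 1 ≤ i → i ≤ Δ → z i = x / i + y) :
    (∀ i : ℕ, 1 ≤ i → i ≤ Δ → 0 ≤ z i) ∧
    (∀ i j : ℕ, 1 ≤ i → i < j → j ≤ Δ → z i + z j ≥ (j : K) - i) ∧
    (∀ i : ℕ, 1 ≤ i → i ≤ Δ → x + (i : K) * y ≥ (i : K) * z i) := by
  have hpair (i j : ℕ) (hi : 1 ≤ i) (hiΔ : i ≤ Δ) (hj : 1 ≤ j) (hjΔ : j ≤ Δ) :
      Δ - i ≤ z i + z j := by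
    have hj₀ : (0 : K) < j := by exact_mod_cast hj
    have hΔ : Δ ≠ 0 := (hj₀.trans_le hjΔ).ne'
    have hy₂ : 2 * y = Δ - (2 * d + 1) - x / Δ := by rw [hy, hx]; field_simp; ring
    have hx₀ : 0 ≤ x := hx ▸ intCast_mul_add_one_nonneg d
    have hxi : (2 * d + 1 : K) ≤ x / i + i := by
      simpa [hx] using two_mul_add_one_le_mul_add_one_div_add (K := K) d (i := i) (by omega)
    rw [hz i hi hiΔ, hz j hj hjΔ]
    exact sub_le_div_add_add_div_add hx₀ hy₂ hxi hj₀ hjΔ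
  refine ⟨fun i hi hiΔ ↦ ?_, fun i j hi hij hjΔ ↦ ?_, fun i hi hiΔ ↦ ?_⟩
  · linarith [hpair i i hi hiΔ hi hiΔ]
  · have hiΔ : (i : K) ≤ Δ := (Nat.cast_le.mpr hij.le).trans hjΔ
    linarith [hpair i j hi hiΔ (hi.trans hij.le) hjΔ]
  · have hi₀ : (i : K) ≠ 0 := Nat.cast_ne_zero.mpr (by omega)
    rw [hz i hi hiΔ, mul_add, mul_div_cancel₀ x hi₀]

end OrderedField

theorem stmt_18 (Δ d : ℕ) (hΔ : 1 ≤ Δ) (hd : d ≤ Δ - 1)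
    (x y : ℝ) (hx : x = (d : ℝ) * (d + 1))
    (hy : y = ((Δ : ℝ) ^ 2 - (2 * d + 1) * Δ - (d : ℝ) ^ 2 - d) / (2 * Δ))
    (z : ℕ → ℝ) (hzdef : ∀ i : ℕ, 1 ≤ i → i ≤ Δ → z i = x / i + y) :
    (∀ i : ℕ, 1 ≤ i → i ≤ Δ → 0 ≤ z i) ∧
    (∀ i j : ℕ, 1 ≤ i → i < j → j ≤ Δ → z i + z j ≥ (j : ℝ) - i) ∧
    (∀ i : ℕ, 1 ≤ i → i ≤ Δ → x + (i : ℝ) * y ≥ (i : ℝ) * z i) := by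
  simpa only [Nat.cast_le] using
    stmt_18_general (Δ : ℝ) d x y (mod_cast hx) (mod_cast hy) z (mod_cast hzdef)
end
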